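/- Let f : {0,1}^n → {0,1} and let col be any 2-coloring of the edges of the hypercube {0,1}^n with colors red and blue (i.e., a symmetric assignment of a color to each pair {x, x ⊕ e_i}). Then E_x[‖∇_red f(x)‖₂ + ‖∇_blue f(x)‖₂] ≥ (1/2)·√(W_{=1}[f]). -/

import Mathlib

open Finset

noncomputable section

/-- Expectation over the uniform distribution on `{0,1}^n`. -/
def hcExp (n : ℕ) (g : (Fin n → Bool) → ℝ) : ℝ :=
  (∑ x : Fin n → Bool, g x) / 2 ^ n

/-- Flip the `i`-th coordinate of `x`. -/
def hcFlip {n : ℕ} (x : Fin n → Bool) (i : Fin n) : Fin n → Bool :=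
  Function.update x i (!(x i))

/-- Sensitivity of `f` at `x`. -/
def sens {n : ℕ} (f : (Fin n → Bool) → Bool) (x : Fin n → Bool) : ℕ :=
  (Finset.univ.filter fun i => f (hcFlip x i) ≠ f x).card

/-- `f` with values in `{0,1} ⊆ ℝ`. -/
def toReal {n : ℕ} (f : (Fin n → Bool) → Bool) : (Fin n → Bool) → ℝ :=
  fun x => if f x then 1 else 0

/-- Variance of a Boolean function. -/
def hcVar (n : ℕ) (f : (Fin n → Bool) → Bool) : ℝ :=
  hcExp n (toReal f) - (hcExp n (toReal f)) ^ 2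

/-- Influence of coordinate `i`. -/
def influence (n : ℕ) (f : (Fin n → Bool) → Bool) (i : Fin n) : ℝ :=
  hcExp n (fun x => if f (hcFlip x i) = f x then 0 else 1)

/-- Fourier character. -/
def chi {n : ℕ} (S : Finset (Fin n)) (x : Fin n → Bool) : ℝ :=
  ∏ i ∈ S, (if x i then (-1 : ℝ) else 1)

/-- Fourier coefficient of `g` at `S`. -/
def fcoef (n : ℕ) (g : (Fin n → Bool) → ℝ) (S : Finset (Fin n)) : ℝ :=
  hcExp n (fun x => g x * chi S x)

/-- Derivative of `g` along coordinate `i`. -/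
def derivOn {n : ℕ} (g : (Fin n → Bool) → ℝ) (i : Fin n) (x : Fin n → Bool) : ℝ :=
  g (Function.update x i false) - g (Function.update x i true)

/-- Euclidean norm of the gradient of `g` at `x`. -/
def gradNorm2 {n : ℕ} (g : (Fin n → Bool) → ℝ) (x : Fin n → Bool) : ℝ :=
  Real.sqrt (∑ i, (derivOn g i x) ^ 2)

/-- `ℓ_p` norm of the gradient of `g` at `x`. -/
def gradNormP {n : ℕ} (p : ℝ) (g : (Fin n → Bool) → ℝ) (x : Fin n → Bool) : ℝ :=
  (∑ i, |derivOn g i x| ^ p) ^ (1 / p)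

/-- Fourier weight at exactly level `d`. -/
def wEq (n : ℕ) (g : (Fin n → Bool) → ℝ) (d : ℕ) : ℝ :=
  ∑ S ∈ Finset.univ.filter (fun S : Finset (Fin n) => S.card = d), (fcoef n g S) ^ 2

/-- Approximate level-`d` Fourier weight: levels in `[d, 2d)`. -/
def wApprox (n : ℕ) (g : (Fin n → Bool) → ℝ) (d : ℕ) : ℝ :=
  ∑ S ∈ Finset.univ.filter (fun S : Finset (Fin n) => d ≤ S.card ∧ S.card < 2 * d),
    (fcoef n g S) ^ 2

/-- Fourier weight at levels `≥ d`. -/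
def wGe (n : ℕ) (g : (Fin n → Bool) → ℝ) (d : ℕ) : ℝ :=
  ∑ S ∈ Finset.univ.filter (fun S : Finset (Fin n) => d ≤ S.card), (fcoef n g S) ^ 2


/-- Number of red sensitive edges at `x` counted when `f x = 1` (red sensitivity).
Here a coloring `col : (Fin n → Bool) → Fin n → Bool` gives the color (`true` = red,
`false` = blue) of the edge `(x, x ⊕ eᵢ)`. -/
def sRed {n : ℕ} (f : (Fin n → Bool) → Bool) (col : (Fin n → Bool) → Fin n → Bool)
    (x : Fin n → Bool) : ℕ :=
  if f x then
    (Finset.univ.filter fun i => f (hcFlip x i) ≠ f x ∧ col x i = true).card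
  else 0

/-- Blue sensitivity: counted when `f x = 0`. -/
def sBlue {n : ℕ} (f : (Fin n → Bool) → Bool) (col : (Fin n → Bool) → Fin n → Bool)
    (x : Fin n → Bool) : ℕ :=
  if f x then 0
  else (Finset.univ.filter fun i => f (hcFlip x i) ≠ f x ∧ col x i = false).card

/-- The Talagrand boundary with respect to the coloring `col`. -/
def talagrandCol {n : ℕ} (f : (Fin n → Bool) → Bool)
    (col : (Fin n → Bool) → Fin n → Bool) : ℝ :=
  hcExp n (fun x => Real.sqrt (sRed f col x)) + hcExp n (fun x => Real.sqrt (sBlue f col x))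

/-- The coloring is symmetric: the two endpoints of an edge see the same color. -/
def colSymm {n : ℕ} (col : (Fin n → Bool) → Fin n → Bool) : Prop :=
  ∀ (x : Fin n → Bool) (i : Fin n), col (hcFlip x i) i = col x i

/-- The red gradient: `i`-th coordinate is `1` iff `f x = 1` and `(x, x ⊕ eᵢ)` is a
red sensitive edge. -/
def redGradNorm {n : ℕ} (f : (Fin n → Bool) → Bool)
    (col : (Fin n → Bool) → Fin n → Bool) (x : Fin n → Bool) : ℝ :=
  Real.sqrt (∑ i,
    (if f x = true ∧ f (hcFlip x i) ≠ f x ∧ col x i = true then (1 : ℝ) else 0) ^ 2)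

/-- The blue gradient: `i`-th coordinate is `1` iff `f x = 0` and `(x, x ⊕ eᵢ)` is a
blue sensitive edge. -/
def blueGradNorm {n : ℕ} (f : (Fin n → Bool) → Bool)
    (col : (Fin n → Bool) → Fin n → Bool) (x : Fin n → Bool) : ℝ :=
  Real.sqrt (∑ i,
    (if f x = false ∧ f (hcFlip x i) ≠ f x ∧ col x i = false then (1 : ℝ) else 0) ^ 2)

/-!
If a vector field `v` on the cube satisfies `v x i - v (x ⊕ eᵢ) i = g x - g (x ⊕ eᵢ)` for all `x`
and `i`, then `v · i` and `g` have the same Fourier coefficient at `{i}`, since that coefficient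
only sees differences along direction `i`. The vector of level-1 coefficients of `g` is therefore
the average over `x` of the vectors `i ↦ v x i * χ_{i}(x)`, which have the same length as `v x`, and
Minkowski's inequality bounds its length by `E ‖v x‖`. For `g = f` a coloring provides such a field:
charge the jump of `f` across each edge to a single endpoint, the one with value `1` if the edge is
red and the one with value `0` if it is blue.
-/

section

variable {n : ℕ}

lemma hcFlip_involutive (i : Fin n) : Function.Involutive fun x : Fin n → Bool => hcFlip x i :=
  fun x => by simp [hcFlip]

lemma hcExp_comp_hcFlip (g : (Fin n → Bool) → ℝ) (i : Fin n) :
    hcExp n (fun x => g (hcFlip x i)) = hcExp n g := by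
  rw [hcExp, (hcFlip_involutive i).bijective.sum_comp g, hcExp]

lemma sqrt_sum_hcExp_sq_le {ι : Type*} [Fintype ι] (v : (Fin n → Bool) → ι → ℝ) :
    √(∑ i, hcExp n (fun x => v x i) ^ 2) ≤ hcExp n fun x => √(∑ i, v x i ^ 2) := by
  let V (x : Fin n → Bool) : EuclideanSpace ℝ ι := WithLp.toLp 2 (v x)
  have norm_V (x) : ‖V x‖ = √(∑ i, v x i ^ 2) := by simp [V, EuclideanSpace.norm_eq]
  calc √(∑ i, hcExp n (fun x => v x i) ^ 2)
    _ = ‖((2 : ℝ) ^ n)⁻¹ • ∑ x, V x‖ := by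
      simp [EuclideanSpace.norm_eq, V, hcExp, div_eq_inv_mul, mul_pow]
    _ = ‖∑ x, V x‖ / 2 ^ n := by simp [norm_smul, div_eq_inv_mul]
    _ ≤ (∑ x, ‖V x‖) / 2 ^ n := by gcongr; exact norm_sum_le _ _
    _ = hcExp n fun x => √(∑ i, v x i ^ 2) := by simp only [hcExp, norm_V]

lemma chi_sq (S : Finset (Fin n)) (x : Fin n → Bool) : chi S x ^ 2 = 1 := by
  rw [chi, ← prod_pow]
  exact prod_eq_one fun i _ => by split_ifs <;> norm_num

lemma chi_hcFlip_of_mem {S : Finset (Fin n)} {i : Fin n} (hi : i ∈ S) (x : Fin n → Bool) :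
    chi S (hcFlip x i) = -chi S x := by
  have off_i : ∀ j ∈ S.erase i, (if hcFlip x i j then (-1 : ℝ) else 1) = if x j then -1 else 1 :=
    fun j hj => by rw [hcFlip, Function.update_of_ne (ne_of_mem_erase hj)]
  rw [chi, chi, ← mul_prod_erase S _ hi, ← mul_prod_erase S _ hi, prod_congr rfl off_i, ← neg_mul]
  cases h : x i <;> simp [hcFlip, h]

lemma two_mul_fcoef_of_mem (g : (Fin n → Bool) → ℝ) {S : Finset (Fin n)} {i : Fin n} (hi : i ∈ S) :
    2 * fcoef n g S = hcExp n fun x => (g x - g (hcFlip x i)) * chi S x := by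
  calc 2 * fcoef n g S
    _ = hcExp n (fun x => g x * chi S x) +
          hcExp n (fun x => g (hcFlip x i) * chi S (hcFlip x i)) := by
      rw [hcExp_comp_hcFlip (fun x => g x * chi S x), ← two_mul, fcoef]
    _ = hcExp n fun x => (g x - g (hcFlip x i)) * chi S x := by
      simp only [hcExp, ← add_div, ← sum_add_distrib, chi_hcFlip_of_mem hi, mul_neg,
        ← sub_eq_add_neg, ← sub_mul]

lemma fcoef_congr_of_mem {g h : (Fin n → Bool) → ℝ} {S : Finset (Fin n)} {i : Fin n} (hi : i ∈ S)
    (hgh : ∀ x, g x - g (hcFlip x i) = h x - h (hcFlip x i)) :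
    fcoef n g S = fcoef n h S := by
  have two_mul_eq : 2 * fcoef n g S = 2 * fcoef n h S := by
    simp only [two_mul_fcoef_of_mem _ hi, hgh]
  exact mul_left_cancel₀ two_ne_zero two_mul_eq

lemma wEq_one (g : (Fin n → Bool) → ℝ) : wEq n g 1 = ∑ i, fcoef n g {i} ^ 2 := by
  rw [wEq, univ_filter_card_eq, powersetCard_one, sum_map]
  rfl

theorem sqrt_wEq_one_le_hcExp_sqrt_sum_sq {g : (Fin n → Bool) → ℝ} {v : (Fin n → Bool) → Fin n → ℝ}
    (hv : ∀ x i, v x i - v (hcFlip x i) i = g x - g (hcFlip x i)) :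
    √(wEq n g 1) ≤ hcExp n fun x => √(∑ i, v x i ^ 2) := by
  have coef_eq (i) : fcoef n g {i} = fcoef n (v · i) {i} :=
    fcoef_congr_of_mem (mem_singleton_self i) fun x => (hv x i).symm
  calc √(wEq n g 1)
    _ = √(∑ i, hcExp n (fun x => v x i * chi {i} x) ^ 2) := by
      simp only [wEq_one, coef_eq]
      rfl
    _ ≤ hcExp n fun x => √(∑ i, (v x i * chi {i} x) ^ 2) := sqrt_sum_hcExp_sq_le _
    _ = hcExp n fun x => √(∑ i, v x i ^ 2) := by simp only [mul_pow, chi_sq, mul_one]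

/-- The signed two-colored gradient `∇_red f - ∇_blue f`. As `true` encodes both the color red and
the value `1`, the endpoint of an edge that is charged for it is the one where `col` and `f`
agree. -/
def colGrad (f : (Fin n → Bool) → Bool) (col : (Fin n → Bool) → Fin n → Bool)
    (x : Fin n → Bool) (i : Fin n) : ℝ :=
  if col x i = f x then toReal f x - toReal f (hcFlip x i) else 0

lemma colGrad_sub_colGrad_hcFlip (f : (Fin n → Bool) → Bool)
    {col : (Fin n → Bool) → Fin n → Bool} (hcol : colSymm col) (x : Fin n → Bool) (i : Fin n) :
    colGrad f col x i - colGrad f col (hcFlip x i) i = toReal f x - toReal f (hcFlip x i) := by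
  have flip_flip : hcFlip (hcFlip x i) i = x := hcFlip_involutive i x
  simp only [colGrad, toReal, flip_flip, hcol x i]
  cases f x <;> cases f (hcFlip x i) <;> cases col x i <;> simp

lemma sqrt_sum_colGrad_sq (f : (Fin n → Bool) → Bool) (col : (Fin n → Bool) → Fin n → Bool)
    (x : Fin n → Bool) :
    √(∑ i, colGrad f col x i ^ 2) = redGradNorm f col x + blueGradNorm f col x := by
  cases hx : f x
  · have red_eq_zero : redGradNorm f col x = 0 := by simp [redGradNorm, hx]
    rw [red_eq_zero, zero_add, blueGradNorm]
    congr! 2 with i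
    cases hy : f (hcFlip x i) <;> cases hc : col x i <;> simp [colGrad, toReal, hx, hy, hc]
  · have blue_eq_zero : blueGradNorm f col x = 0 := by simp [blueGradNorm, hx]
    rw [blue_eq_zero, add_zero, redGradNorm]
    congr! 2 with i
    cases hy : f (hcFlip x i) <;> cases hc : col x i <;> simp [colGrad, toReal, hx, hy, hc]

theorem robust_level_one_bound_general (f : (Fin n → Bool) → Bool)
    {col : (Fin n → Bool) → Fin n → Bool} (hcol : colSymm col) :
    √(wEq n (toReal f) 1) ≤ hcExp n fun x => redGradNorm f col x + blueGradNorm f col x := by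
  simpa only [sqrt_sum_colGrad_sq] using
    sqrt_wEq_one_le_hcExp_sqrt_sum_sq (colGrad_sub_colGrad_hcFlip f hcol)

end

theorem robust_level_one_bound (n : ℕ) (f : (Fin n → Bool) → Bool)
    (col : (Fin n → Bool) → Fin n → Bool) (hcol : colSymm col) :
    hcExp n (fun x => redGradNorm f col x + blueGradNorm f col x) ≥
      (1 / 2) * Real.sqrt (wEq n (toReal f) 1) := by
  linarith [robust_level_one_bound_general f hcol, Real.sqrt_nonneg (wEq n (toReal f) 1)]

end
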